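/- arXiv:1906.05515 — 5 statements merged into one kernel-verified Lean document; each statement's English description precedes it below -/
import Mathlib

section
/- Let S be a regular monoid such that for every finitely generated right congruence ρ on S and all elements a, b, x, y ∈ S, the right ideals (aS)ρ ∩ (bS)ρ and (aS, x) ∩ (bS, y) of S are finitely generated. Then S is right coherent. -/
def IsRightCongruence {M : Type*} [Monoid M] (r : M → M → Prop) : Prop :=
  Equivalence r ∧ ∀ a b c : M, r a b → r (a * c) (b * c)

def RCongGenBy {M : Type*} [Monoid M] (H : Set (M × M)) (r : M → M → Prop) : Prop :=
  IsRightCongruence r ∧ (∀ p ∈ H, r p.1 p.2) ∧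
    ∀ r' : M → M → Prop, IsRightCongruence r' → (∀ p ∈ H, r' p.1 p.2) →
      ∀ x y : M, r x y → r' x y

def FGRightCongruence {M : Type*} [Monoid M] (r : M → M → Prop) : Prop :=
  ∃ H : Set (M × M), H.Finite ∧ RCongGenBy H r

def RightCoherent (M : Type*) [Monoid M] : Prop :=
  ∀ r : M → M → Prop, FGRightCongruence r → ∀ a b : M,
    (∃ C : Finset M,
      {x : M | (∃ s : M, r x (a * s)) ∧ (∃ t : M, r x (b * t))} =
        ⋃ c ∈ C, {x : M | ∃ s : M, r x (c * s)}) ∧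
    FGRightCongruence (fun u v : M => r (a * u) (a * v))

def IsRightIdeal {M : Type*} [Monoid M] (I : Set M) : Prop :=
  ∀ a ∈ I, ∀ s : M, a * s ∈ I

def FGRightIdeal {M : Type*} [Monoid M] (I : Set M) : Prop :=
  ∃ A : Finset M, I = ⋃ a ∈ A, {x : M | ∃ s : M, x = a * s}

def WeaklyRightNoetherian (M : Type*) [Monoid M] : Prop :=
  ∀ I : Set M, IsRightIdeal I → FGRightIdeal I

/-!
Let `C` generate the right ideal `(aS)ρ`. If `c ∈ C` and `c ρ at`, then regularity, say `c = cdc`,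
makes left multiplication by `td` a right inverse, modulo `ρ`, of left multiplication by `a` on
`cS`. So every element of `(aS)ρ` can be lifted along `a`, by finitely many left multiplications.
Given any right congruence `σ`, consider the elements that are `σ`-related to some lift of `x`.
As soon as `σ` contains a suitable finite part of `ann(aρ)`, these depend only on the `ρ`-class of
`x`, and those of `ax` are precisely the elements of the `σ`-class of `x`; hence `ann(aρ) ⊆ σ`.

The finite part is found through generators of the right ideals `(cS, x)`. In a regular monoid the
kernel of left multiplication by `x` is a finitely generated right congruence `κ`, and
if `aS ∩ xS` is generated by `xn₁, …, xnₖ`, then `(aS, x) = (n₁S)κ ∪ … ∪ (nₖS)κ`.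
-/

section RightCongruence

variable {M : Type*} [Monoid M] {r : M → M → Prop}

theorem IsRightCongruence.mul_right (hr : IsRightCongruence r) {x y : M} (hxy : r x y) (s : M) :
    r (x * s) (y * s) :=
  hr.2 x y s hxy

theorem isRightCongruence_eq : IsRightCongruence (Eq : M → M → Prop) :=
  ⟨eq_equivalence, fun _ _ c h => congrArg (· * c) h⟩

theorem IsRightCongruence.comap_mul_left (hr : IsRightCongruence r) (a : M) :
    IsRightCongruence fun u v => r (a * u) (a * v) :=
  ⟨hr.1.comap (a * ·), fun u v s h => by simpa only [mul_assoc] using hr.mul_right h s⟩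

theorem isRightCongruence_forall_mul_right_eq {β : Type*} (f : M → β) :
    IsRightCongruence fun x y => ∀ s, f (x * s) = f (y * s) :=
  ⟨⟨fun _ _ => rfl, fun h s => (h s).symm, fun h k s => (h s).trans (k s)⟩,
    fun x y c h s => by simpa only [mul_assoc] using h (c * s)⟩

theorem FGRightCongruence.isRightCongruence (hr : FGRightCongruence r) : IsRightCongruence r :=
  hr.choose_spec.2.1

theorem fgRightCongruence_of_finite (hr : IsRightCongruence r) {Y : Set M} (hY : Y.Finite)
    (hmin : ∀ σ : M → M → Prop, IsRightCongruence σ →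
      (∀ u ∈ Y, ∀ v ∈ Y, r u v → σ u v) → ∀ x y, r x y → σ x y) :
    FGRightCongruence r :=
  ⟨{p ∈ Y ×ˢ Y | r p.1 p.2}, (hY.prod hY).subset (Set.sep_subset _ _), hr, fun _ hp => hp.2,
    fun σ hσ hle => hmin σ hσ fun u hu v hv huv => hle (u, v) ⟨⟨hu, hv⟩, huv⟩⟩

theorem fgRightCongruence_eq : FGRightCongruence (Eq : M → M → Prop) :=
  fgRightCongruence_of_finite isRightCongruence_eq Set.finite_empty
    fun _ hσ _ x _ hxy => hxy ▸ hσ.1.refl x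

theorem fgRightCongruence_ker_mul_left {x : M} (hx : ∃ y, x = x * y * x) :
    FGRightCongruence fun u v => x * u = x * v := by
  obtain ⟨y, hy⟩ := hx
  refine fgRightCongruence_of_finite (isRightCongruence_eq.comap_mul_left x)
    (Set.toFinite {1, y * x}) fun σ hσ hle u v huv => ?_
  have one_rel : σ 1 (y * x) :=
    hle 1 (by simp) (y * x) (by simp) (by rw [mul_one, ← mul_assoc, ← hy])
  have rel_mul (t : M) : σ t (y * (x * t)) := by
    simpa only [one_mul, mul_assoc] using hσ.mul_right one_rel t
  exact hσ.1.trans (rel_mul u) (huv ▸ hσ.1.symm (rel_mul v))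

end RightCongruence

section RightIdeal

variable {M : Type*} [Monoid M]

/-- The closure `(aM)r` of the principal right ideal `aM` under the relation `r`; the ideal `aM`
itself is the case where `r` is equality. -/
def principalClosure (r : M → M → Prop) (a : M) : Set M :=
  {s | ∃ t, r s (a * t)}

/-- The right ideal `(aM, x)` of all `t` such that `x * t` lies in `aM`. -/
def principalColon (a x : M) : Set M :=
  {t | ∃ u, x * t = a * u}

theorem fgRightIdeal_iff {I : Set M} :
    FGRightIdeal I ↔ ∃ A : Finset M, ∀ x, x ∈ I ↔ ∃ a ∈ A, ∃ s, x = a * s := by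
  simp only [FGRightIdeal, Set.ext_iff, Set.mem_iUnion, Set.mem_ofPred_eq, exists_prop]

theorem FGRightIdeal.biUnion {ι : Type*} {A : Finset ι} {I : ι → Set M}
    (hI : ∀ i ∈ A, FGRightIdeal (I i)) : FGRightIdeal (⋃ i ∈ A, I i) := by
  classical
  choose! B hB using hI
  refine ⟨A.biUnion B, ?_⟩
  rw [Finset.set_biUnion_biUnion]
  exact Set.iUnion₂_congr hB

theorem FGRightIdeal.exists_eq_biUnion_principalClosure {r : M → M → Prop}
    (hrefl : ∀ x, r x x) {I : Set M} (hI : FGRightIdeal I)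
    (hsat : ∀ x y, r x y → y ∈ I → x ∈ I) :
    ∃ C : Finset M, I = ⋃ c ∈ C, principalClosure r c := by
  obtain ⟨C, hC⟩ := fgRightIdeal_iff.1 hI
  refine ⟨C, Set.Subset.antisymm (fun x hx => ?_) (Set.iUnion₂_subset fun c hc x hx => ?_)⟩
  · obtain ⟨c, hc, s, rfl⟩ := (hC x).1 hx
    exact Set.mem_biUnion hc ⟨s, hrefl _⟩
  · obtain ⟨s, hs⟩ := hx
    exact hsat x (c * s) hs ((hC _).2 ⟨c, hc, s, rfl⟩)

theorem fgRightIdeal_principalColon {a x : M}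
    (hinter : FGRightIdeal (principalClosure Eq x ∩ principalClosure Eq a))
    (hker : ∀ b, FGRightIdeal (principalClosure (fun u v => x * u = x * v) b)) :
    FGRightIdeal (principalColon a x) := by
  obtain ⟨A, hA⟩ := fgRightIdeal_iff.1 hinter
  have exists_quotient : ∀ m ∈ A, ∃ n, m = x * n := fun m hm =>
    ((hA m).2 ⟨m, hm, 1, (mul_one m).symm⟩).1
  choose! n hn using exists_quotient
  have colon_eq : principalColon a x =
      ⋃ m ∈ A, principalClosure (fun u v => x * u = x * v) (n m) := by
    ext t
    have mem_inter : x * t ∈ principalClosure Eq x ∩ principalClosure Eq a ↔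
        t ∈ principalColon a x := and_iff_right ⟨t, rfl⟩
    simp only [← mem_inter, hA, Set.mem_iUnion, exists_prop]
    refine exists_congr fun m => and_congr_right fun hm => exists_congr fun s => ?_
    change x * t = m * s ↔ x * t = x * (n m * s)
    rw [← mul_assoc x, ← hn m hm]
  exact colon_eq ▸ FGRightIdeal.biUnion fun m _ => hker (n m)

theorem exists_finite_generators_principalColon {C P : Set M} (hC : C.Finite) (hP : P.Finite)
    (hcolon : ∀ c ∈ C, ∀ p ∈ P, FGRightIdeal (principalColon c p)) :
    ∃ W : Set M, W.Finite ∧ ∀ c ∈ C, ∀ p ∈ P, ∀ t ∈ principalColon c p,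
      ∃ w ∈ W, w ∈ principalColon c p ∧ ∃ s, t = w * s := by
  simp only [fgRightIdeal_iff] at hcolon
  choose! A hA using hcolon
  refine ⟨⋃ c ∈ C, ⋃ p ∈ P, (A c p : Set M),
    hC.biUnion fun c _ => hP.biUnion fun p _ => (A c p).finite_toSet, fun c hc p hp t ht => ?_⟩
  obtain ⟨w, hw, hs⟩ := (hA c hc p hp t).1 ht
  exact ⟨w, Set.mem_biUnion hc (Set.mem_biUnion hp hw),
    (hA c hc p hp w).2 ⟨w, hw, 1, (mul_one w).symm⟩, hs⟩

end RightIdeal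

section LocalSection

variable {M : Type*} [Monoid M]

/-- The principal right ideals `cM` with `c ∈ C` cover `(aM)r`, and on each `cM` left
multiplication by `g c` is a right inverse, modulo `r`, of left multiplication by `a`. The second
condition is imposed at `c` only, which suffices when `r` is a right congruence. -/
structure IsLocalSection (r : M → M → Prop) (a : M) (C : Set M) (g : M → M) : Prop where
  exists_eq_mul : ∀ x ∈ principalClosure r a, ∃ c ∈ C, ∃ v, x = c * v
  rel_generator : ∀ c ∈ C, r (a * (g c * c)) c

/-- The elements that are `σ`-related to a lift `g c * x` of `x`, where `c` runs over the elements
of `C` with `x ∈ cM`. -/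
def lifts (σ : M → M → Prop) (C : Set M) (g : M → M) (x : M) : Set M :=
  {u | ∃ c ∈ C, (∃ v, x = c * v) ∧ σ u (g c * x)}

/-- The elements on which a right congruence is compared with the annihilator of `a`: the set `W`,
and all the candidate lifts `g c * (p * w)` of products of elements of `P` and `W`. -/
def liftTestSet (C : Set M) (g : M → M) (P W : Set M) : Set M :=
  W ∪ Set.image2 (fun c x => g c * x) C (Set.image2 (· * ·) P W)

theorem liftTestSet_finite {C P W : Set M} (g : M → M) (hC : C.Finite) (hP : P.Finite)
    (hW : W.Finite) : (liftTestSet C g P W).Finite :=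
  hW.union (hC.image2 _ (hP.image2 _ hW))

theorem lift_mem_liftTestSet {C P W : Set M} (g : M → M) {c p w : M} (hc : c ∈ C) (hp : p ∈ P)
    (hw : w ∈ W) : g c * (p * w) ∈ liftTestSet C g P W :=
  Or.inr (Set.mem_image2_of_mem hc (Set.mem_image2_of_mem hp hw))

theorem exists_isLocalSection (hreg : ∀ c : M, ∃ d, c = c * d * c) {r : M → M → Prop}
    (hr : IsRightCongruence r) {a : M} (ha : FGRightIdeal (principalClosure r a)) :
    ∃ (C : Set M) (g : M → M), C.Finite ∧ IsLocalSection r a C g := by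
  obtain ⟨C, hC⟩ := fgRightIdeal_iff.1 ha
  have exists_section : ∀ c ∈ C, ∃ g, r (a * (g * c)) c := fun c hc => by
    obtain ⟨t, ht⟩ := (hC c).2 ⟨c, hc, 1, (mul_one c).symm⟩
    obtain ⟨d, hd⟩ := hreg c
    have h : r (a * t * (d * c)) (c * (d * c)) := hr.mul_right (hr.1.symm ht) _
    rw [← mul_assoc c, ← hd] at h
    exact ⟨t * d, by simpa only [mul_assoc] using h⟩
  choose! g hg using exists_section
  exact ⟨C, g, C.finite_toSet, fun x => (hC x).1, hg⟩

namespace IsLocalSection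

variable {r σ : M → M → Prop} {a : M} {C P W : Set M} {g : M → M}

theorem rel_lift (hs : IsLocalSection r a C g) (hr : IsRightCongruence r) {c x : M} (hc : c ∈ C)
    (hx : ∃ v, x = c * v) : r (a * (g c * x)) x := by
  obtain ⟨v, rfl⟩ := hx
  simpa only [mul_assoc] using hr.mul_right (hs.rel_generator c hc) v

theorem lifts_mul_subset (hs : IsLocalSection r a C g) (hr : IsRightCongruence r)
    (hσ : IsRightCongruence σ)
    (hW : ∀ c ∈ C, ∀ p ∈ P, ∀ t ∈ principalColon c p,
      ∃ w ∈ W, w ∈ principalColon c p ∧ ∃ s, t = w * s)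
    (hle : ∀ u ∈ liftTestSet C g P W, ∀ v ∈ liftTestSet C g P W, r (a * u) (a * v) → σ u v)
    {p q : M} (hp : p ∈ P) (hq : q ∈ P) (hpq : r p q) (s : M) :
    lifts σ C g (p * s) ⊆ lifts σ C g (q * s) := by
  rintro u ⟨c, hc, hcs, hu⟩
  obtain ⟨w, hw, hcw, s', rfl⟩ := hW c hc p hp s hcs
  have lift_rel_q : r (a * (g c * (p * w))) (q * w) :=
    hr.1.trans (hs.rel_lift hr hc hcw) (hr.mul_right hpq w)
  obtain ⟨d, hd, v, hv⟩ := hs.exists_eq_mul (q * w) ⟨_, hr.1.symm lift_rel_q⟩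
  have lifts_rel : σ (g c * (p * w)) (g d * (q * w)) :=
    hle _ (lift_mem_liftTestSet g hc hp hw) _ (lift_mem_liftTestSet g hd hq hw)
      (hr.1.trans lift_rel_q (hr.1.symm (hs.rel_lift hr hd ⟨v, hv⟩)))
  refine ⟨d, hd, ⟨v * s', by rw [← mul_assoc, hv, mul_assoc]⟩, hσ.1.trans hu ?_⟩
  simpa only [mul_assoc] using hσ.mul_right lifts_rel s'

theorem lifts_mul_left (hs : IsLocalSection r a C g) (hr : IsRightCongruence r)
    (hσ : IsRightCongruence σ)
    (hW : ∀ c ∈ C, ∀ p ∈ P, ∀ t ∈ principalColon c p,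
      ∃ w ∈ W, w ∈ principalColon c p ∧ ∃ s, t = w * s)
    (hle : ∀ u ∈ liftTestSet C g P W, ∀ v ∈ liftTestSet C g P W, r (a * u) (a * v) → σ u v)
    (ha : a ∈ P) (x : M) : lifts σ C g (a * x) = {u | σ u x} := by
  have lift_rel {c : M} (hc : c ∈ C) (hx : x ∈ principalColon c a) : σ (g c * (a * x)) x := by
    obtain ⟨w, hw, hcw, s, rfl⟩ := hW c hc a ha x hx
    have generator_rel : σ (g c * (a * w)) w :=
      hle _ (lift_mem_liftTestSet g hc ha hw) w (Or.inl hw) (hs.rel_lift hr hc hcw)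
    simpa only [mul_assoc] using hσ.mul_right generator_rel s
  ext u
  constructor
  · rintro ⟨c, hc, hx, hu⟩
    exact hσ.1.trans hu (lift_rel hc hx)
  · intro hu
    obtain ⟨c, hc, hx⟩ := hs.exists_eq_mul (a * x) ⟨x, hr.1.refl _⟩
    exact ⟨c, hc, hx, hσ.1.trans hu (hσ.1.symm (lift_rel hc hx))⟩

theorem fgRightCongruence_annihilator (hs : IsLocalSection r a C g) (hC : C.Finite)
    (hr : FGRightCongruence r) (hcolon : ∀ c ∈ C, ∀ p, FGRightIdeal (principalColon c p)) :
    FGRightCongruence fun u v => r (a * u) (a * v) := by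
  obtain ⟨H, hH, hr, hHr, hmin⟩ := hr
  let P : Set M := {a} ∪ (Prod.fst '' H ∪ Prod.snd '' H)
  have hP : P.Finite := (Set.finite_singleton a).union ((hH.image _).union (hH.image _))
  obtain ⟨W, hWfin, hW⟩ :=
    exists_finite_generators_principalColon hC hP fun c hc p _ => hcolon c hc p
  refine fgRightCongruence_of_finite (hr.comap_mul_left a) (liftTestSet_finite g hC hP hWfin)
    fun σ hσ hle x y hxy => ?_
  have lifts_eq_of_mem : ∀ p ∈ H, ∀ s, lifts σ C g (p.1 * s) = lifts σ C g (p.2 * s) := by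
    intro p hp s
    have hfst : p.1 ∈ P := Or.inr (Or.inl ⟨p, hp, rfl⟩)
    have hsnd : p.2 ∈ P := Or.inr (Or.inr ⟨p, hp, rfl⟩)
    exact (hs.lifts_mul_subset hr hσ hW hle hfst hsnd (hHr p hp) s).antisymm
      (hs.lifts_mul_subset hr hσ hW hle hsnd hfst (hr.1.symm (hHr p hp)) s)
  have lifts_eq : lifts σ C g (a * x) = lifts σ C g (a * y) := by
    simpa only [mul_one] using hmin _ (isRightCongruence_forall_mul_right_eq (lifts σ C g))
      lifts_eq_of_mem _ _ hxy 1
  have lifts_mul_left := hs.lifts_mul_left hr hσ hW hle (Or.inl rfl)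
  rw [lifts_mul_left, lifts_mul_left] at lifts_eq
  exact lifts_eq.subset (hσ.1.refl x)

end IsLocalSection

end LocalSection

theorem stmt0_general {S : Type*} [Monoid S]
    (hreg : ∀ a : S, ∃ b : S, a = a * b * a)
    (h : ∀ r : S → S → Prop, FGRightCongruence r → ∀ a b : S,
      FGRightIdeal (principalClosure r a ∩ principalClosure r b)) :
    RightCoherent S := by
  have closure_fg {r : S → S → Prop} (hr : FGRightCongruence r) (a : S) :
      FGRightIdeal (principalClosure r a) := by
    simpa only [Set.inter_self] using h r hr a a
  have colon_fg (a x : S) : FGRightIdeal (principalColon a x) :=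
    fgRightIdeal_principalColon (h Eq fgRightCongruence_eq x a)
      (closure_fg (fgRightCongruence_ker_mul_left (hreg x)))
  intro r hr a b
  have hrc := hr.isRightCongruence
  constructor
  · refine (h r hr a b).exists_eq_biUnion_principalClosure hrc.1.refl ?_
    rintro x y hxy ⟨⟨s, hs⟩, ⟨t, ht⟩⟩
    exact ⟨⟨s, hrc.1.trans hxy hs⟩, ⟨t, hrc.1.trans hxy ht⟩⟩
  · obtain ⟨C, g, hC, hs⟩ := exists_isLocalSection hreg hrc (closure_fg hr a)
    exact hs.fgRightCongruence_annihilator hC hr fun c _ => colon_fg c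

theorem stmt0 {S : Type*} [Monoid S]
    (hreg : ∀ a : S, ∃ b : S, a = a * b * a)
    (h : ∀ r : S → S → Prop, FGRightCongruence r → ∀ a b x y : S,
      FGRightIdeal ({s : S | ∃ t : S, r s (a * t)} ∩ {s : S | ∃ t : S, r s (b * t)}) ∧
      FGRightIdeal ({t : S | ∃ u : S, x * t = a * u} ∩ {t : S | ∃ v : S, y * t = b * v})) :
    RightCoherent S :=
  stmt0_general hreg fun r hr a b => (h r hr a b 1 1).1
end

section
/- Every weakly right noetherian regular monoid is right coherent. -/
/-!
Let `ρ` be generated by a finite set `H`, and let `J = {x | xρ ∈ (aρ)S}`, a right ideal. As `S` is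
regular and weakly right noetherian, `J` is covered by the sets `{x | e * x = x}` with `e` ranging
over a finite subset of `J`. If `e ρ (a * t)`, then `x ρ (a * (t * x))` whenever `e * x = x`, so
left multiplication by `t` lifts this piece of `J` along `u ↦ a * u`. Hence `ann(aρ)` is generated
by the pairs consisting of an element `u` and a lift of `a * u`, together with the pairs obtained
by lifting both sides of `(p * c) ρ (q * c)` for `(p, q) ∈ H` and `p * c ∈ J`. For a fixed choice
of the multipliers `t`, these pairs are the translates of a single pair by the elements of a right
ideal, so finitely many of them suffice.
-/

section

variable {M : Type*} [Monoid M] {r : M → M → Prop} {H K : Set (M × M)} {I J E : Set M}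

section RightIdeal

theorem IsRightIdeal.inter (hI : IsRightIdeal I) (hJ : IsRightIdeal J) : IsRightIdeal (I ∩ J) :=
  fun x hx s => ⟨hI x hx.1 s, hJ x hx.2 s⟩

theorem isRightIdeal_setOf_mul_mul_eq (e p : M) :
    IsRightIdeal {u : M | e * (p * u) = p * u} := by
  intro u (hu : e * (p * u) = p * u) s
  calc e * (p * (u * s)) = e * (p * u) * s := by simp only [mul_assoc]
    _ = p * (u * s) := by rw [hu, mul_assoc]

theorem FGRightIdeal.exists_finset_mem_iff (hI : FGRightIdeal I) :
    ∃ A : Finset M, ∀ x, x ∈ I ↔ ∃ g ∈ A, ∃ s, x = g * s := by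
  obtain ⟨A, rfl⟩ := hI
  exact ⟨A, fun x => by simp only [Set.mem_iUnion, Set.mem_ofPred_eq, exists_prop]⟩

theorem FGRightIdeal.exists_finite_mul_eq_self (hfg : FGRightIdeal I) (hI : IsRightIdeal I)
    (hreg : ∀ a ∈ I, ∃ b : M, a = a * b * a) :
    ∃ E ⊆ I, E.Finite ∧ ∀ x ∈ I, ∃ e ∈ E, e * x = x := by
  obtain ⟨A, hA⟩ := hfg.exists_finset_mem_iff
  choose! b hb using hreg
  have hAI : ∀ g ∈ A, g ∈ I := fun g hg => (hA g).2 ⟨g, hg, 1, (mul_one g).symm⟩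
  refine ⟨(fun g => g * b g) '' A, ?_, A.finite_toSet.image _, fun x hx => ?_⟩
  · rintro _ ⟨g, hg, rfl⟩
    exact hI g (hAI g hg) (b g)
  · obtain ⟨g, hg, s, rfl⟩ := (hA x).1 hx
    exact ⟨g * b g, ⟨g, hg, rfl⟩, by rw [← mul_assoc, ← hb g (hAI g hg)]⟩

end RightIdeal

section RightCongruence

/-- The preimage in `M` of the cyclic subact `(aρ)M` of the quotient act `M/ρ`. -/
def cyclicPreimage (r : M → M → Prop) (a : M) : Set M :=
  {x | ∃ s, r x (a * s)}

/-- The annihilator `ann(aρ)` of the class of `a` in the quotient act `M/ρ`. -/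
def annRel (r : M → M → Prop) (a : M) : M → M → Prop :=
  fun u v => r (a * u) (a * v)

theorem IsRightCongruence.isRightIdeal_cyclicPreimage (hr : IsRightCongruence r) (a : M) :
    IsRightIdeal (cyclicPreimage r a) := by
  rintro x ⟨t, ht⟩ s
  exact ⟨t * s, by simpa only [mul_assoc] using hr.2 x (a * t) s ht⟩

theorem IsRightCongruence.mem_cyclicPreimage_iff (hr : IsRightCongruence r) {x y : M} (h : r x y)
    (a : M) : x ∈ cyclicPreimage r a ↔ y ∈ cyclicPreimage r a :=
  ⟨fun ⟨s, hs⟩ => ⟨s, hr.1.trans (hr.1.symm h) hs⟩, fun ⟨s, hs⟩ => ⟨s, hr.1.trans h hs⟩⟩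

theorem IsRightCongruence.isRightCongruence_annRel (hr : IsRightCongruence r) (a : M) :
    IsRightCongruence (annRel r a) :=
  ⟨hr.1.comap (a * ·), fun u v c huv => by
    simpa only [annRel, mul_assoc] using hr.2 _ _ c huv⟩

theorem FGRightIdeal.exists_eq_biUnion_cyclicPreimage (hI : FGRightIdeal I)
    (hr : IsRightCongruence r) (hsat : ∀ x y, r x y → y ∈ I → x ∈ I) :
    ∃ C : Finset M, I = ⋃ c ∈ C, cyclicPreimage r c := by
  obtain ⟨C, hC⟩ := hI.exists_finset_mem_iff
  refine ⟨C, Set.Subset.antisymm (fun x hx => ?_) (Set.iUnion₂_subset ?_)⟩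
  · obtain ⟨c, hc, s, rfl⟩ := (hC x).1 hx
    exact Set.mem_biUnion hc ⟨s, hr.1.refl _⟩
  · rintro c hc x ⟨s, hs⟩
    exact hsat x (c * s) hs ((hC _).2 ⟨c, hc, s, rfl⟩)

theorem isRightCongruence_forall_mul {R : M → M → Prop} (hR : Equivalence R) :
    IsRightCongruence fun x y => ∀ c, R (x * c) (y * c) :=
  ⟨⟨fun _ _ => hR.refl _, fun h c => hR.symm (h c), fun h h' c => hR.trans (h c) (h' c)⟩,
    fun x y d h c => by simpa only [mul_assoc] using h (d * c)⟩

theorem RCongGenBy.rel_of_equivalence {R : M → M → Prop} (h : RCongGenBy H r)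
    (hR : Equivalence R) (hHR : ∀ p ∈ H, ∀ c, R (p.1 * c) (p.2 * c)) {x y : M} (hxy : r x y) :
    R x y := by
  simpa only [mul_one] using h.2.2 _ (isRightCongruence_forall_mul hR) hHR x y hxy 1

theorem RCongGenBy.rCongGenBy_annRel_of_lift {a : M} (h : RCongGenBy H r)
    (hK : ∀ p ∈ K, annRel r a p.1 p.2) (τ : M → M) (hτ : ∀ u, (u, τ (a * u)) ∈ K)
    (hHτ : ∀ p ∈ H, ∀ c, p.1 * c ∈ cyclicPreimage r a → p.2 * c ∈ cyclicPreimage r a →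
      (τ (p.1 * c), τ (p.2 * c)) ∈ K) :
    RCongGenBy K (annRel r a) := by
  refine ⟨h.1.isRightCongruence_annRel a, hK, fun r' hr' hKr' u v huv => ?_⟩
  -- `R` is the kernel of the partial map `x ↦ (τ x)r'` defined on `cyclicPreimage r a`.
  let R : M → M → Prop := fun x y =>
    (x ∈ cyclicPreimage r a ↔ y ∈ cyclicPreimage r a) ∧
      (x ∈ cyclicPreimage r a → r' (τ x) (τ y))
  have hR : Equivalence R :=
    ⟨fun x => ⟨Iff.rfl, fun _ => hr'.1.refl _⟩,
      fun hxy => ⟨hxy.1.symm, fun hy => hr'.1.symm (hxy.2 (hxy.1.2 hy))⟩,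
      fun hxy hyz => ⟨hxy.1.trans hyz.1,
        fun hx => hr'.1.trans (hxy.2 hx) (hyz.2 (hxy.1.1 hx))⟩⟩
  have hHR : ∀ p ∈ H, ∀ c, R (p.1 * c) (p.2 * c) := fun p hp c =>
    have hiff := h.1.mem_cyclicPreimage_iff (h.1.2 _ _ c (h.2.1 p hp)) a
    ⟨hiff, fun hc => hKr' _ (hHτ p hp c hc (hiff.1 hc))⟩
  have hlift : r' (τ (a * u)) (τ (a * v)) :=
    (h.rel_of_equivalence hR hHR huv).2 ⟨u, h.1.1.refl _⟩
  exact hr'.1.trans (hKr' _ (hτ u)) (hr'.1.trans hlift (hr'.1.symm (hKr' _ (hτ v))))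

end RightCongruence

section HasFiniteBasis

/-- A set of pairs has a finite basis if some finite subset of it generates the same right
congruence. -/
def HasFiniteBasis (K : Set (M × M)) : Prop :=
  ∃ F ⊆ K, F.Finite ∧ ∀ r : M → M → Prop, IsRightCongruence r →
    (∀ p ∈ F, r p.1 p.2) → ∀ p ∈ K, r p.1 p.2

theorem HasFiniteBasis.union (hH : HasFiniteBasis H) (hK : HasFiniteBasis K) :
    HasFiniteBasis (H ∪ K) := by
  obtain ⟨F, hFH, hF, hFr⟩ := hH
  obtain ⟨G, hGK, hG, hGr⟩ := hK
  refine ⟨F ∪ G, Set.union_subset_union hFH hGK, hF.union hG, fun r hr h p hp => ?_⟩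
  exact hp.elim (hFr r hr (fun q hq => h q (Or.inl hq)) p)
    (hGr r hr (fun q hq => h q (Or.inr hq)) p)

theorem HasFiniteBasis.biUnion {ι : Type*} {s : Set ι} (hs : s.Finite) {K : ι → Set (M × M)}
    (hK : ∀ i ∈ s, HasFiniteBasis (K i)) : HasFiniteBasis (⋃ i ∈ s, K i) := by
  choose! F hFK hF hFr using hK
  refine ⟨⋃ i ∈ s, F i, Set.biUnion_mono subset_rfl hFK, hs.biUnion hF, fun r hr h p hp => ?_⟩
  obtain ⟨i, hi, hpi⟩ := Set.mem_iUnion₂.1 hp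
  exact hFr i hi r hr (fun q hq => h q (Set.mem_biUnion hi hq)) p hpi

theorem FGRightIdeal.hasFiniteBasis_image (hI : FGRightIdeal I) (p q : M) :
    HasFiniteBasis ((fun u => (p * u, q * u)) '' I) := by
  obtain ⟨A, hA⟩ := hI.exists_finset_mem_iff
  refine ⟨(fun u => (p * u, q * u)) '' A,
    Set.image_mono fun g hg => (hA g).2 ⟨g, hg, 1, (mul_one g).symm⟩,
    A.finite_toSet.image _, fun r hr h => ?_⟩
  rintro _ ⟨u, hu, rfl⟩
  obtain ⟨g, hg, s, rfl⟩ := (hA u).1 hu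
  simpa only [mul_assoc] using hr.2 _ _ s (h _ ⟨g, hg, rfl⟩)

theorem RCongGenBy.fgRightCongruence (h : RCongGenBy K r) (hK : HasFiniteBasis K) :
    FGRightCongruence r := by
  obtain ⟨F, hFK, hF, hFr⟩ := hK
  exact ⟨F, hF, h.1, fun p hp => h.2.1 p (hFK hp),
    fun r' hr' hFr' => h.2.2 r' hr' (hFr r' hr' hFr')⟩

end HasFiniteBasis

section Annihilator

/-- The relators of `ann(aρ)` obtained when each `x` with `e * x = x`, `e ∈ E`, is lifted along
`u ↦ a * u` to `t e * x`: every `u` is identified with the lifts of `a * u`, and the lifts of the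
two sides of each translate of a pair in `H` are identified. -/
def annRelators (H : Set (M × M)) (a : M) (E : Set M) (t : M → M) : Set (M × M) :=
  (⋃ e ∈ E, (fun u => (u, t e * (a * u))) '' {u | e * (a * u) = a * u}) ∪
    ⋃ p ∈ H, ⋃ e ∈ E, ⋃ f ∈ E, (fun u => (t e * (p.1 * u), t f * (p.2 * u))) ''
      ({u | e * (p.1 * u) = p.1 * u} ∩ {u | f * (p.2 * u) = p.2 * u})

theorem mem_annRelators_of_mul_eq {a e u : M} {t : M → M} (he : e ∈ E)
    (hu : e * (a * u) = a * u) : (u, t e * (a * u)) ∈ annRelators H a E t :=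
  Or.inl (Set.mem_biUnion he ⟨u, hu, rfl⟩)

theorem mem_annRelators_of_mem {a e f u : M} {t : M → M} {p : M × M} (hp : p ∈ H) (he : e ∈ E)
    (hf : f ∈ E) (hu : e * (p.1 * u) = p.1 * u) (hu' : f * (p.2 * u) = p.2 * u) :
    (t e * (p.1 * u), t f * (p.2 * u)) ∈ annRelators H a E t :=
  Or.inr (Set.mem_biUnion hp (Set.mem_biUnion he (Set.mem_biUnion hf
    ⟨u, ⟨hu, hu'⟩, rfl⟩)))

theorem WeaklyRightNoetherian.hasFiniteBasis_annRelators (hwn : WeaklyRightNoetherian M)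
    (hH : H.Finite) (a : M) (hE : E.Finite) (t : M → M) :
    HasFiniteBasis (annRelators H a E t) := by
  refine .union (.biUnion hE fun e _ => ?_)
    (.biUnion hH fun p _ => .biUnion hE fun e _ => .biUnion hE fun f _ => ?_)
  · simpa only [one_mul, mul_assoc] using
      (hwn _ (isRightIdeal_setOf_mul_mul_eq e a)).hasFiniteBasis_image 1 (t e * a)
  · simpa only [mul_assoc] using (hwn _ ((isRightIdeal_setOf_mul_mul_eq e p.1).inter
      (isRightIdeal_setOf_mul_mul_eq f p.2))).hasFiniteBasis_image (t e * p.1) (t f * p.2)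

theorem IsRightCongruence.rel_mul_of_mul_eq_self (hr : IsRightCongruence r) {a e t x : M}
    (het : r e (a * t)) (hx : e * x = x) : r x (a * (t * x)) := by
  simpa only [hx, mul_assoc] using hr.2 e (a * t) x het

theorem IsRightCongruence.annRel_of_mem_annRelators (hr : IsRightCongruence r)
    (hHr : ∀ p ∈ H, r p.1 p.2) {a : M} {t : M → M} (ht : ∀ e ∈ E, r e (a * t e)) :
    ∀ p ∈ annRelators H a E t, annRel r a p.1 p.2 := by
  rintro _ (h | h) <;> simp only [Set.mem_iUnion] at h
  · obtain ⟨e, he, u, hu, rfl⟩ := h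
    exact hr.rel_mul_of_mul_eq_self (ht e he) hu
  · obtain ⟨p, hp, e, he, f, hf, u, ⟨hu, hu'⟩, rfl⟩ := h
    have hlift : r (p.1 * u) (a * (t e * (p.1 * u))) := hr.rel_mul_of_mul_eq_self (ht e he) hu
    have hlift' : r (p.2 * u) (a * (t f * (p.2 * u))) := hr.rel_mul_of_mul_eq_self (ht f hf) hu'
    exact hr.1.trans (hr.1.symm hlift) (hr.1.trans (hr.2 _ _ u (hHr p hp)) hlift')

theorem RCongGenBy.rCongGenBy_annRelators {a : M} {t : M → M} (h : RCongGenBy H r)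
    (hE : ∀ x ∈ cyclicPreimage r a, ∃ e ∈ E, e * x = x) (ht : ∀ e ∈ E, r e (a * t e)) :
    RCongGenBy (annRelators H a E t) (annRel r a) := by
  choose! ε hεE hε using hE
  refine h.rCongGenBy_annRel_of_lift (h.1.annRel_of_mem_annRelators h.2.1 ht)
    (fun x => t (ε x) * x) ?_ ?_
  · intro u
    have hu : a * u ∈ cyclicPreimage r a := ⟨u, h.1.1.refl _⟩
    exact mem_annRelators_of_mul_eq (hεE _ hu) (hε _ hu)
  · intro p hp c hc hc'
    exact mem_annRelators_of_mem hp (hεE _ hc) (hεE _ hc') (hε _ hc) (hε _ hc')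

theorem FGRightCongruence.fgRightCongruence_annRel (hr : FGRightCongruence r)
    (hreg : ∀ a : M, ∃ b : M, a = a * b * a) (hwn : WeaklyRightNoetherian M) (a : M) :
    FGRightCongruence (annRel r a) := by
  obtain ⟨H, hH, hgen⟩ := hr
  have hJ : IsRightIdeal (cyclicPreimage r a) := hgen.1.isRightIdeal_cyclicPreimage a
  obtain ⟨E, hEJ, hEfin, hE⟩ := (hwn _ hJ).exists_finite_mul_eq_self hJ fun x _ => hreg x
  choose! t ht using hEJ
  exact (hgen.rCongGenBy_annRelators hE ht).fgRightCongruence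
    (hwn.hasFiniteBasis_annRelators hH a hEfin t)

end Annihilator

theorem WeaklyRightNoetherian.exists_cyclicPreimage_inter_eq (hwn : WeaklyRightNoetherian M)
    (hr : IsRightCongruence r) (a b : M) :
    ∃ C : Finset M, cyclicPreimage r a ∩ cyclicPreimage r b = ⋃ c ∈ C, cyclicPreimage r c :=
  (hwn _ ((hr.isRightIdeal_cyclicPreimage a).inter
    (hr.isRightIdeal_cyclicPreimage b))).exists_eq_biUnion_cyclicPreimage hr fun _ _ hxy =>
      And.imp (hr.mem_cyclicPreimage_iff hxy a).2 (hr.mem_cyclicPreimage_iff hxy b).2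

end

theorem stmt1 {S : Type*} [Monoid S]
    (hreg : ∀ a : S, ∃ b : S, a = a * b * a)
    (hwn : WeaklyRightNoetherian S) :
    RightCoherent S := by
  intro r hr a b
  have hcong : IsRightCongruence r := hr.elim fun _ hH => hH.2.1
  exact ⟨hwn.exists_cyclicPreimage_inter_eq hcong a b, hr.fgRightCongruence_annRel hreg hwn a⟩
end

section
/- For every group G and every endomorphism θ : G → G, the Bruck–Reilly extension BR(G, θ) is coherent, i.e. both right and left coherent. -/
def IsLeftCongruence {M : Type*} [Monoid M] (r : M → M → Prop) : Prop :=
  Equivalence r ∧ ∀ a b c : M, r a b → r (c * a) (c * b)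

def LCongGenBy {M : Type*} [Monoid M] (H : Set (M × M)) (r : M → M → Prop) : Prop :=
  IsLeftCongruence r ∧ (∀ p ∈ H, r p.1 p.2) ∧
    ∀ r' : M → M → Prop, IsLeftCongruence r' → (∀ p ∈ H, r' p.1 p.2) →
      ∀ x y : M, r x y → r' x y

def FGLeftCongruence {M : Type*} [Monoid M] (r : M → M → Prop) : Prop :=
  ∃ H : Set (M × M), H.Finite ∧ LCongGenBy H r

def LeftCoherent (M : Type*) [Monoid M] : Prop :=
  ∀ r : M → M → Prop, FGLeftCongruence r → ∀ a b : M,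
    (∃ C : Finset M,
      {x : M | (∃ s : M, r x (s * a)) ∧ (∃ t : M, r x (t * b))} =
        ⋃ c ∈ C, {x : M | ∃ s : M, r x (s * c)}) ∧
    FGLeftCongruence (fun u v : M => r (u * a) (v * a))

/-!
Right coherence rests on the elements `q = (1, 1, 0)` and `p = (0, 1, 1)`, which satisfy `p q = 1`.
Every element is `qᵏ u` with `u` right invertible. Hence the principal right ideals form a chain,
which settles the intersections, and `ann (a b) = ann (ann a) b` reduces finite generation of
annihilators to `ann (a ρ)` with `a` right invertible or `a = q`. There it suffices that `(a ρ) S`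
is a retract of `S / ρ`. If `1 ρ a t` for some `t`, then `(a ρ) S` is all of `S / ρ`; this covers
every right invertible `a`. If `1` is not related to any element of `q S`, then `ρ` relates elements
of `q S` only to each other, and `(0, g, b)` only to elements `(0, h, b)`. On such pairs left
multiplication by `q p` agrees with a right multiplication, so it preserves `ρ` and is the required
retraction for `a = q`.

Left coherence follows by duality, as `(a, g, b) ↦ (b, g⁻¹, a)` reverses products.
-/

section RightCongruence

variable {M : Type*} [Monoid M] {r : M → M → Prop}

/-- The annihilator of the class of `a` in the cyclic right act `M / r`; right coherence requires it
to be finitely generated. -/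
def rightAnn (r : M → M → Prop) (a : M) : M → M → Prop :=
  fun u v => r (a * u) (a * v)

theorem IsRightCongruence.rightAnn (hr : IsRightCongruence r) (a : M) :
    IsRightCongruence (rightAnn r a) :=
  ⟨⟨fun _ => hr.1.refl _, fun h => hr.1.symm h, fun h k => hr.1.trans h k⟩, fun u v c h => by
    simpa only [_root_.rightAnn, mul_assoc] using hr.2 _ _ c h⟩

theorem rightAnn_one (r : M → M → Prop) : rightAnn r 1 = r := by
  unfold rightAnn
  simp only [one_mul]

theorem rightAnn_mul (r : M → M → Prop) (a b : M) :
    rightAnn r (a * b) = rightAnn (rightAnn r a) b := by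
  unfold rightAnn
  simp only [mul_assoc]

-- The hypotheses say that `x ↦ a t x` induces a retraction of `M / r` onto the subact `(a r) M`.
theorem FGRightCongruence.rightAnn_of_retraction (hr : FGRightCongruence r) {a t : M}
    (hmap : ∀ u v, r u v → r (a * (t * u)) (a * (t * v))) (hfix : r a (a * (t * a))) :
    FGRightCongruence (rightAnn r a) := by
  have hcong := hr.isRightCongruence
  obtain ⟨H, hfin, -, hH, hmin⟩ := hr
  refine ⟨insert (1, t * a) ((fun p : M × M => (t * p.1, t * p.2)) '' H),
    (hfin.image _).insert _, hcong.rightAnn a, ?_, fun r' hr' hgen x y hxy => ?_⟩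
  · rintro _ (rfl | ⟨p, hp, rfl⟩)
    · simpa only [rightAnn, mul_one] using hfix
    · exact hmap _ _ (hH p hp)
  · have hle : r' (t * (a * x)) (t * (a * y)) :=
      hmin (rightAnn r' t) (hr'.rightAnn t) (fun p hp => hgen _ (.inr ⟨p, hp, rfl⟩)) _ _ hxy
    have hone (u : M) : r' u (t * (a * u)) := by
      simpa only [one_mul, mul_assoc] using hr'.2 _ _ u (hgen (1, t * a) (.inl rfl))
    exact hr'.1.trans (hone x) (hr'.1.trans hle (hr'.1.symm (hone y)))

theorem FGRightCongruence.rightAnn_of_rel_one (hr : FGRightCongruence r) {a t : M}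
    (h : r 1 (a * t)) : FGRightCongruence (rightAnn r a) := by
  obtain ⟨heq, hmul⟩ := hr.isRightCongruence
  have hat (u : M) : r u (a * (t * u)) := by
    simpa only [one_mul, mul_assoc] using hmul _ _ u h
  exact hr.rightAnn_of_retraction
    (fun u v huv => heq.trans (heq.symm (hat u)) (heq.trans huv (hat v))) (hat a)

/-- The elements of `M` whose annihilator is finitely generated in every finitely presented cyclic
right act. They form a submonoid, so the annihilator condition of right coherence need only be
checked on generators of `M`. -/
def fgRightAnn (M : Type*) [Monoid M] : Submonoid M where
  carrier := {a | ∀ r : M → M → Prop, FGRightCongruence r → FGRightCongruence (rightAnn r a)}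
  one_mem' r hr := by rwa [rightAnn_one]
  mul_mem' ha hb r hr := by
    rw [rightAnn_mul]
    exact hb _ (ha r hr)

-- In a noncommutative monoid, `u ∣ 1` means that `u` has a right inverse.
theorem mem_fgRightAnn_of_dvd_one {u : M} (hu : u ∣ 1) : u ∈ fgRightAnn M := by
  obtain ⟨t, ht⟩ := hu
  intro r hr
  refine hr.rightAnn_of_rel_one (t := t) ?_
  rw [← ht]
  exact hr.isRightCongruence.1.refl 1

theorem inter_eq_of_dvd {a b : M} (hab : a ∣ b) :
    {x : M | (∃ s, r x (a * s)) ∧ ∃ t, r x (b * t)} = {x : M | ∃ t, r x (b * t)} := by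
  obtain ⟨s, rfl⟩ := hab
  ext x
  refine and_iff_right_of_imp fun ⟨t, ht⟩ => ⟨s * t, ?_⟩
  rwa [← mul_assoc]

theorem rightCoherent_of_dvd_total (hdvd : ∀ a b : M, a ∣ b ∨ b ∣ a)
    (hann : ∀ a : M, a ∈ fgRightAnn M) : RightCoherent M := by
  refine fun r hr a b => ⟨?_, hann a r hr⟩
  rcases hdvd a b with h | h
  · refine ⟨{b}, ?_⟩
    simpa only [Finset.mem_singleton, Set.iUnion_iUnion_eq_left] using inter_eq_of_dvd h
  · refine ⟨{a}, ?_⟩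
    simpa only [Finset.mem_singleton, Set.iUnion_iUnion_eq_left, and_comm] using
      inter_eq_of_dvd h

theorem rightCoherent_of_eq_pow_mul {q : M} (hq : q ∈ fgRightAnn M)
    (hM : ∀ x : M, ∃ (k : ℕ) (u : M), u ∣ 1 ∧ x = q ^ k * u) : RightCoherent M := by
  have hdvd {k l : ℕ} {u v : M} (hu : u ∣ 1) (hkl : k ≤ l) : q ^ k * u ∣ q ^ l * v :=
    calc q ^ k * u ∣ q ^ k * 1 := mul_dvd_mul_left _ hu
      _ = q ^ k := mul_one _
      _ ∣ q ^ l := pow_dvd_pow q hkl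
      _ ∣ q ^ l * v := dvd_mul_right _ _
  refine rightCoherent_of_dvd_total (fun a b => ?_) (fun a => ?_)
  · obtain ⟨k, u, hu, rfl⟩ := hM a
    obtain ⟨l, v, hv, rfl⟩ := hM b
    exact (le_total k l).imp (hdvd hu) (hdvd hv)
  · obtain ⟨k, u, hu, rfl⟩ := hM a
    exact mul_mem (pow_mem hq k) (mem_fgRightAnn_of_dvd_one hu)

end RightCongruence

section Duality

open MulOpposite

variable {M : Type*} [Monoid M]

theorem isRightCongruence_op_iff {r : M → M → Prop} :
    IsRightCongruence (fun x y : Mᵐᵒᵖ => r x.unop y.unop) ↔ IsLeftCongruence r :=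
  ⟨fun h => ⟨⟨fun _ => h.1.refl (op _), fun k => h.1.symm k, fun k l => h.1.trans k l⟩,
      fun _ _ c k => h.2 (op _) (op _) (op c) k⟩,
    fun h => ⟨⟨fun _ => h.1.refl _, fun k => h.1.symm k, fun k l => h.1.trans k l⟩,
      fun _ _ c k => h.2 _ _ c.unop k⟩⟩

theorem rCongGenBy_op_iff {H : Set (M × M)} {r : M → M → Prop} :
    RCongGenBy (Prod.map unop unop ⁻¹' H) (fun x y : Mᵐᵒᵖ => r x.unop y.unop) ↔
      LCongGenBy H r :=
  ⟨fun ⟨hr, hH, hmin⟩ => ⟨isRightCongruence_op_iff.1 hr, fun p hp => hH (Prod.map op op p) hp,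
      fun _ hr' hgen _ _ h =>
        hmin _ (isRightCongruence_op_iff.2 hr') (fun _ hp => hgen _ hp) (op _) (op _) h⟩,
    fun ⟨hr, hH, hmin⟩ => ⟨isRightCongruence_op_iff.2 hr, fun _ hp => hH _ hp,
      fun r' hr' hgen _ _ h =>
        hmin (fun x y => r' (op x) (op y)) (isRightCongruence_op_iff.1 hr')
          (fun p hp => hgen (Prod.map op op p) hp) _ _ h⟩⟩

theorem fgRightCongruence_op_iff {r : M → M → Prop} :
    FGRightCongruence (fun x y : Mᵐᵒᵖ => r x.unop y.unop) ↔ FGLeftCongruence r :=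
  ⟨fun ⟨H, hfin, hH⟩ => ⟨Prod.map op op ⁻¹' H,
      hfin.preimage (op_injective.prodMap op_injective).injOn, rCongGenBy_op_iff.1 hH⟩,
    fun ⟨H, hfin, hH⟩ => ⟨Prod.map unop unop ⁻¹' H,
      hfin.preimage (unop_injective.prodMap unop_injective).injOn, rCongGenBy_op_iff.2 hH⟩⟩

theorem leftCoherent_of_rightCoherent_op (h : RightCoherent Mᵐᵒᵖ) : LeftCoherent M := by
  classical
  intro r hr a b
  obtain ⟨⟨C, hC⟩, hann⟩ := h _ (fgRightCongruence_op_iff.2 hr) (op a) (op b)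
  refine ⟨⟨C.image unop, ?_⟩, fgRightCongruence_op_iff.1 hann⟩
  ext x
  simpa [MulOpposite.exists] using Set.ext_iff.1 hC (op x)

end Duality

/-- `f` is a monoid homomorphism from the Bruck–Reilly extension `BR(M, θ)` to `S`, which makes `S`
a homomorphic image of `BR(M, θ)` when `f` is surjective. The multiplication of `BR(M, θ)` is
spelled out on `ℕ × M × ℕ`, with `a - b + t` written `a + (t - b)` so that the subtraction is never
truncated. -/
structure IsBruckReillyHom {M S : Type*} [Monoid M] [Monoid S] (θ : M →* M)
    (f : ℕ × M × ℕ → S) : Prop where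
  map_one : f (0, 1, 0) = 1
  map_mul : ∀ (a : ℕ) (g : M) (b : ℕ) (c : ℕ) (h : M) (d : ℕ),
    f (a, g, b) * f (c, h, d) =
      f (a + (max b c - b),
         (⇑θ)^[max b c - b] g * (⇑θ)^[max b c - c] h,
         d + (max b c - c))

namespace IsBruckReillyHom

section Monoid

variable {M S : Type*} [Monoid M] [Monoid S] {θ : M →* M} {f : ℕ × M × ℕ → S}

theorem proj_mul_shift (hf : IsBruckReillyHom θ f) : f (0, 1, 1) * f (1, 1, 0) = 1 := by
  simp [hf.map_mul, hf.map_one]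

theorem shift_pow (hf : IsBruckReillyHom θ f) (k : ℕ) : f (1, 1, 0) ^ k = f (k, 1, 0) := by
  induction k with
  | zero => rw [pow_zero, hf.map_one]
  | succ k ih => simp [pow_succ, ih, hf.map_mul]

theorem eq_shift_pow_mul (hf : IsBruckReillyHom θ f) (a : ℕ) (g : M) (b : ℕ) :
    f (a, g, b) = f (1, 1, 0) ^ a * f (0, g, b) := by
  simp [hf.shift_pow, hf.map_mul]

theorem shift_dvd (hf : IsBruckReillyHom θ f) {a : ℕ} (ha : 0 < a) (g : M) (b : ℕ) :
    f (1, 1, 0) ∣ f (a, g, b) := by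
  rw [hf.eq_shift_pow_mul a]
  exact (dvd_pow_self (f (1, 1, 0)) ha.ne').mul_right _

theorem shift_dvd_mul (hf : IsBruckReillyHom θ f) {b c d : ℕ} (h : 0 < c ∨ d < b) (g k : M) :
    f (1, 1, 0) ∣ f (c, g, d) * f (b, k, 0) := by
  rw [hf.map_mul]
  exact hf.shift_dvd (by omega) _ _

theorem shift_mul_proj_mul_of_dvd (hf : IsBruckReillyHom θ f) {x : S} (hx : f (1, 1, 0) ∣ x) :
    f (1, 1, 0) * (f (0, 1, 1) * x) = x := by
  obtain ⟨y, rfl⟩ := hx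
  rw [← mul_assoc (f (0, 1, 1)), hf.proj_mul_shift, one_mul]

theorem shift_mul_proj_mul (hf : IsBruckReillyHom θ f) (g : M) (b : ℕ) :
    f (1, 1, 0) * (f (0, 1, 1) * f (0, g, b)) = f (0, g, b) * f (b + 1, 1, b + 1) := by
  simp [hf.map_mul, iterate_map_one]

end Monoid

section Group

variable {G S : Type*} [Group G] [Monoid S] {θ : G →* G} {f : ℕ × G × ℕ → S}
  {r : S → S → Prop}

theorem mul_inv_eq_one (hf : IsBruckReillyHom θ f) (g : G) (b : ℕ) :
    f (0, g, b) * f (b, g⁻¹, 0) = 1 := by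
  simp [hf.map_mul, hf.map_one]

theorem eq_zero_and_le_of_rel (hf : IsBruckReillyHom θ f) (hr : IsRightCongruence r)
    (hshift : ∀ x, f (1, 1, 0) ∣ x → ¬ r 1 x) {g h : G} {b c d : ℕ}
    (hrel : r (f (0, g, b)) (f (c, h, d))) : c = 0 ∧ b ≤ d := by
  have hone : r 1 (f (c, h, d) * f (b, g⁻¹, 0)) := by
    simpa only [hf.mul_inv_eq_one] using hr.2 _ _ (f (b, g⁻¹, 0)) hrel
  by_contra hcd
  exact hshift _ (hf.shift_dvd_mul (by omega) h g⁻¹) hone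

theorem rel_shift_mul_proj_mul (hf : IsBruckReillyHom θ f) (hsurj : Function.Surjective f)
    (hr : IsRightCongruence r) (hshift : ∀ x, f (1, 1, 0) ∣ x → ¬ r 1 x) {u v : S}
    (huv : r u v) : r (f (1, 1, 0) * (f (0, 1, 1) * u)) (f (1, 1, 0) * (f (0, 1, 1) * v)) := by
  obtain ⟨⟨a, g, b⟩, rfl⟩ := hsurj u
  obtain ⟨⟨c, h, d⟩, rfl⟩ := hsurj v
  rcases Nat.eq_zero_or_pos a with rfl | ha
  · obtain ⟨rfl, hbd⟩ := hf.eq_zero_and_le_of_rel hr hshift huv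
    obtain ⟨-, hdb⟩ := hf.eq_zero_and_le_of_rel hr hshift (hr.1.symm huv)
    obtain rfl := hbd.antisymm hdb
    rw [hf.shift_mul_proj_mul, hf.shift_mul_proj_mul]
    exact hr.2 _ _ _ huv
  · have hc : 0 < c := by
      by_contra! hc
      obtain rfl := Nat.le_zero.1 hc
      exact ha.ne' (hf.eq_zero_and_le_of_rel hr hshift (hr.1.symm huv)).1
    rwa [hf.shift_mul_proj_mul_of_dvd (hf.shift_dvd ha g b),
      hf.shift_mul_proj_mul_of_dvd (hf.shift_dvd hc h d)]

theorem shift_mem_fgRightAnn (hf : IsBruckReillyHom θ f) (hsurj : Function.Surjective f) :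
    f (1, 1, 0) ∈ fgRightAnn S := by
  intro r hr
  have hcong := hr.isRightCongruence
  by_cases hone : ∃ t, r 1 (f (1, 1, 0) * t)
  · obtain ⟨t, ht⟩ := hone
    exact hr.rightAnn_of_rel_one ht
  · have hshift : ∀ x, f (1, 1, 0) ∣ x → ¬ r 1 x := by
      rintro _ ⟨t, rfl⟩ ht
      exact hone ⟨t, ht⟩
    refine hr.rightAnn_of_retraction
      (fun u v => hf.rel_shift_mul_proj_mul hsurj hcong hshift) ?_
    rw [hf.proj_mul_shift, mul_one]
    exact hcong.1.refl _

theorem rightCoherent (hf : IsBruckReillyHom θ f) (hsurj : Function.Surjective f) :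
    RightCoherent S := by
  refine rightCoherent_of_eq_pow_mul (hf.shift_mem_fgRightAnn hsurj) fun x => ?_
  obtain ⟨⟨a, g, b⟩, rfl⟩ := hsurj x
  exact ⟨a, f (0, g, b), ⟨_, (hf.mul_inv_eq_one g b).symm⟩, hf.eq_shift_pow_mul a g b⟩

theorem op (hf : IsBruckReillyHom θ f) :
    IsBruckReillyHom θ fun x => MulOpposite.op (f (x.2.2, x.2.1⁻¹, x.1)) where
  map_one := by simp [hf.map_one]
  map_mul a g b c h d := by
    simp only [← MulOpposite.op_mul, hf.map_mul, max_comm c b, mul_inv_rev, iterate_map_inv]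

theorem leftCoherent (hf : IsBruckReillyHom θ f) (hsurj : Function.Surjective f) :
    LeftCoherent S := by
  refine leftCoherent_of_rightCoherent_op (hf.op.rightCoherent fun y => ?_)
  obtain ⟨⟨a, g, b⟩, h⟩ := hsurj y.unop
  exact ⟨(b, g⁻¹, a), by simp [h]⟩

end Group

end IsBruckReillyHom

theorem stmt2_general {G : Type*} [Group G] {θ : G →* G} {S : Type*} [Monoid S]
    {f : ℕ × G × ℕ → S} (hf : IsBruckReillyHom θ f) (hsurj : Function.Surjective f) :
    RightCoherent S ∧ LeftCoherent S :=
  ⟨hf.rightCoherent hsurj, hf.leftCoherent hsurj⟩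

theorem stmt2 {G : Type*} [Group G] (θ : G →* G)
    {S : Type*} [Monoid S] (f : ℕ × G × ℕ → S)
    (hbij : Function.Bijective f)
    (hone : f (0, 1, 0) = 1)
    (hmul : ∀ (a : ℕ) (g : G) (b : ℕ) (c : ℕ) (h : G) (d : ℕ),
      f (a, g, b) * f (c, h, d) =
        f (a + (max b c - b),
           (⇑θ)^[max b c - b] g * (⇑θ)^[max b c - c] h,
           d + (max b c - c))) :
    RightCoherent S ∧ LeftCoherent S :=
  stmt2_general ⟨hone, hmul⟩ hbij.surjective
end

section
/- Let S be a right coherent monoid and let I be a two-sided ideal of S (i.e. SI ⊆ I and IS ⊆ I) which contains an element e with ea = ae = a for all a ∈ I. Then I, regarded as a monoid with identity e under the multiplication of S, is right coherent. -/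
/-!
An identity `e` of a right ideal `I` makes `s ↦ e * s` a multiplicative retraction of `S` onto `I`,
because `(e * s) * (e * t) = (e * s) * t`. Right coherence passes to any retract `φ : N → S`,
`ψ : S → N`: push the generators of a right congruence `ρ` on `N` forward along `φ`, use the
coherence of `S`, and push the resulting generators of subacts and of annihilators back along `ψ`.
-/

section Relations

open Function

variable {M N : Type*} [Monoid M] [Monoid N] {q : M → M → Prop} {r : N → N → Prop}

/-- For a right congruence `q` on `M`, the subact `(aq)M` of `M/q`, encoded as the union in `M` of
the `q`-classes that belong to it. -/
def cyclicSubact (q : M → M → Prop) (a : M) : Set M :=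
  {x | ∃ s, q x (a * s)}

/-- The annihilator `ann(aq)` of the class of `a` in the right act `M/q`, as a relation on `M`. -/
def annihilator (q : M → M → Prop) (a : M) : M → M → Prop :=
  fun u v => q (a * u) (a * v)

/-- The right congruence generated by `H`, as the intersection of all right congruences
containing `H`; it witnesses that the relation described by `RCongGenBy` exists. -/
def rightCongruenceGen (H : Set (M × M)) : M → M → Prop :=
  fun x y => ∀ q : M → M → Prop, IsRightCongruence q → (∀ p ∈ H, q p.1 p.2) → q x y

protected theorem IsRightCongruence.onFun (hr : IsRightCongruence r) (f : M →ₙ* N) :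
    IsRightCongruence (r on f) :=
  ⟨hr.1.comap f, fun a b c hab => by simpa only [onFun, map_mul] using hr.2 _ _ (f c) hab⟩

protected theorem IsRightCongruence.annihilator (hq : IsRightCongruence q) (a : M) :
    IsRightCongruence (annihilator q a) :=
  ⟨hq.1.comap (a * ·), fun u v c huv => by
    simpa only [annihilator, mul_assoc] using hq.2 _ _ c huv⟩

theorem rcongGenBy_rightCongruenceGen (H : Set (M × M)) :
    RCongGenBy H (rightCongruenceGen H) where
  left :=
    ⟨⟨fun x _ hq _ => hq.1.refl x,
      fun hxy q hq hH => hq.1.symm (hxy q hq hH),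
      fun hxy hyz q hq hH => hq.1.trans (hxy q hq hH) (hyz q hq hH)⟩,
      fun a b c hab q hq hH => hq.2 a b c (hab q hq hH)⟩
  right := ⟨fun p hp _ _ hH => hH p hp, fun q hq hH _ _ hxy => hxy q hq hH⟩

theorem RCongGenBy.le_onFun {H : Set (M × M)} (hH : RCongGenBy H q) (hr : IsRightCongruence r)
    (f : M →ₙ* N) (hf : ∀ p ∈ H, r (f p.1) (f p.2)) : q ≤ (r on f) :=
  hH.2.2 _ (hr.onFun f) hf

theorem IsRightCongruence.mem_cyclicSubact_self (hq : IsRightCongruence q) (a : M) :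
    a ∈ cyclicSubact q a :=
  ⟨1, by simpa only [mul_one] using hq.1.refl a⟩

theorem IsRightCongruence.cyclicSubact_subset (hq : IsRightCongruence q) {a c : M}
    (hc : c ∈ cyclicSubact q a) : cyclicSubact q c ⊆ cyclicSubact q a := by
  obtain ⟨s, hs⟩ := hc
  rintro x ⟨t, ht⟩
  exact ⟨s * t, by simpa only [mul_assoc] using hq.1.trans ht (hq.2 _ _ t hs)⟩

theorem mapsTo_cyclicSubact (f : M →ₙ* N) (h : q ≤ (r on f)) (a : M) :
    Set.MapsTo f (cyclicSubact q a) (cyclicSubact r (f a)) := by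
  rintro x ⟨s, hs⟩
  exact ⟨f s, by simpa only [onFun, map_mul] using h _ _ hs⟩

theorem annihilator_le_onFun (f : M →ₙ* N) (h : q ≤ (r on f)) (a : M) :
    annihilator q a ≤ (annihilator r (f a) on f) := fun u v huv => by
  simpa only [onFun, annihilator, map_mul] using h _ _ huv

end Relations

section Retract

open Function

variable {S N : Type*} [Monoid S] [Monoid N] {φ : N →ₙ* S} {ψ : S →ₙ* N}
  {q : S → S → Prop} {r : N → N → Prop}

theorem RCongGenBy.image_of_leftInverse {K : Set (S × S)} (hK : RCongGenBy K q)
    (hr : IsRightCongruence r) (hψφ : LeftInverse ψ φ) (hφ : r ≤ (q on φ)) (hψ : q ≤ (r on ψ)) :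
    RCongGenBy (Prod.map ψ ψ '' K) r := by
  refine ⟨hr, Set.forall_mem_image.2 fun p hp => hψ _ _ (hK.2.1 p hp), ?_⟩
  intro r' hr' hKr' x y hxy
  have hqr' : q ≤ (r' on ψ) := hK.le_onFun hr' ψ (Set.forall_mem_image.1 hKr')
  simpa only [onFun, hψφ x, hψφ y] using hqr' _ _ (hφ _ _ hxy)

theorem cyclicSubact_inter_eq_biUnion_of_leftInverse (hq : IsRightCongruence q)
    (hr : IsRightCongruence r) (hψφ : LeftInverse ψ φ) (hφ : r ≤ (q on φ)) (hψ : q ≤ (r on ψ))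
    {a b : N} {C : Finset S}
    (hC : cyclicSubact q (φ a) ∩ cyclicSubact q (φ b) = ⋃ c ∈ C, cyclicSubact q c) :
    cyclicSubact r a ∩ cyclicSubact r b = ⋃ c ∈ C, cyclicSubact r (ψ c) := by
  have mapsTo_ψ (d : N) : Set.MapsTo ψ (cyclicSubact q (φ d)) (cyclicSubact r d) := by
    simpa only [hψφ d] using mapsTo_cyclicSubact ψ hψ (φ d)
  apply Set.Subset.antisymm
  · rintro x ⟨hxa, hxb⟩
    have hx : φ x ∈ ⋃ c ∈ C, cyclicSubact q c :=
      hC ▸ ⟨mapsTo_cyclicSubact φ hφ a hxa, mapsTo_cyclicSubact φ hφ b hxb⟩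
    obtain ⟨c, hc, hxc⟩ := Set.mem_iUnion₂.1 hx
    exact Set.mem_biUnion hc (hψφ x ▸ mapsTo_cyclicSubact ψ hψ c hxc)
  · refine Set.iUnion₂_subset fun c hc => ?_
    obtain ⟨hca, hcb⟩ : c ∈ cyclicSubact q (φ a) ∩ cyclicSubact q (φ b) :=
      hC ▸ Set.mem_biUnion hc (hq.mem_cyclicSubact_self c)
    exact Set.subset_inter (hr.cyclicSubact_subset (mapsTo_ψ a hca))
      (hr.cyclicSubact_subset (mapsTo_ψ b hcb))

theorem RightCoherent.of_leftInverse (hS : RightCoherent S) (hψφ : LeftInverse ψ φ) :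
    RightCoherent N := by
  classical
  rintro r ⟨H, hHfin, hH⟩ a b
  let q := rightCongruenceGen (Prod.map φ φ '' H)
  have hq : RCongGenBy (Prod.map φ φ '' H) q := rcongGenBy_rightCongruenceGen _
  have hφ : r ≤ (q on φ) := hH.le_onFun hq.1 φ (Set.forall_mem_image.1 hq.2.1)
  have hψ : q ≤ (r on ψ) := hq.le_onFun hH.1 ψ <| Set.forall_mem_image.2 fun p hp => by
    simpa only [Prod.map, hψφ _] using hH.2.1 p hp
  obtain ⟨⟨C, hC⟩, K, hKfin, hK⟩ := hS q ⟨_, hHfin.image _, hq⟩ (φ a) (φ b)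
  constructor
  · refine ⟨C.image ψ, ?_⟩
    rw [Finset.set_biUnion_finset_image]
    exact cyclicSubact_inter_eq_biUnion_of_leftInverse hq.1 hH.1 hψφ hφ hψ hC
  · have hψ_ann : annihilator q (φ a) ≤ (annihilator r a on ψ) := by
      simpa only [hψφ a] using annihilator_le_onFun ψ hψ (φ a)
    exact ⟨_, hKfin.image _, hK.image_of_leftInverse (hH.1.annihilator a) hψφ
      (annihilator_le_onFun φ hφ a) hψ_ann⟩

end Retract

theorem exists_leftInverse_of_mul_mem_range {S N : Type*} [Semigroup S] [Mul N] (φ : N →ₙ* S)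
    (hφ : Function.Injective φ) (e : S) (hrange : ∀ s, e * s ∈ Set.range φ)
    (hel : ∀ x, e * φ x = φ x) (her : ∀ x, φ x * e = φ x) :
    ∃ ψ : S →ₙ* N, Function.LeftInverse ψ φ := by
  choose ψ hψ using hrange
  have ψ_mul (s t : S) : ψ (s * t) = ψ s * ψ t := hφ <| calc
    φ (ψ (s * t)) = e * s * t := by rw [hψ, mul_assoc]
    _ = φ (ψ s) * e * t := by rw [her, hψ]
    _ = φ (ψ s * ψ t) := by rw [map_mul, hψ t, mul_assoc]
  exact ⟨⟨ψ, ψ_mul⟩, fun x => hφ ((hψ (φ x)).trans (hel x))⟩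

theorem stmt6_general {S : Type*} [Monoid S] (hS : RightCoherent S)
    (I : Set S) (hright : ∀ a ∈ I, ∀ s : S, a * s ∈ I)
    (e : S) (he : e ∈ I) (hel : ∀ a ∈ I, e * a = a) (her : ∀ a ∈ I, a * e = a)
    (N : Type*) [Monoid N] (φ : N → S)
    (hinj : Function.Injective φ) (hrange : Set.range φ = I)
    (hmulφ : ∀ x y : N, φ (x * y) = φ x * φ y) :
    RightCoherent N := by
  subst hrange
  obtain ⟨_, hψφ⟩ := exists_leftInverse_of_mul_mem_range ⟨φ, hmulφ⟩ hinj e (hright e he)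
    (fun x => hel _ ⟨x, rfl⟩) (fun x => her _ ⟨x, rfl⟩)
  exact hS.of_leftInverse hψφ

theorem stmt6 {S : Type*} [Monoid S] (hS : RightCoherent S)
    (I : Set S)
    (hleft : ∀ s : S, ∀ a ∈ I, s * a ∈ I)
    (hright : ∀ a ∈ I, ∀ s : S, a * s ∈ I)
    (e : S) (he : e ∈ I)
    (hel : ∀ a ∈ I, e * a = a) (her : ∀ a ∈ I, a * e = a)
    (N : Type*) [Monoid N] (φ : N → S)
    (hinj : Function.Injective φ) (hrange : Set.range φ = I)
    (hmulφ : ∀ x y : N, φ (x * y) = φ x * φ y) (h1φ : φ 1 = e) :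
    RightCoherent N := by
  exact stmt6_general hS I hright e he hel her N φ hinj hrange hmulφ
end

section
/- Let S be a monoid and let T be a subsemigroup of S possessing an identity element e (so T is a monoid under the multiplication of S). If T is weakly left unitary, then T has the strong right congruence extension property (SRCEP): for every right congruence ρ on T, ρ = ρ^S ∩ (T × T) and T is a union of ρ^S-classes, where ρ^S is the right congruence on S generated by ρ. -/
/-!
Relate `x` and `y` in `S` when every right multiplier `c` that sends one of them into `T` sends the
pair into `ρ`. This is a right congruence on `S` that relates an element of `T` only to members of
its own `ρ`-class, so it suffices that it contains `ρ`. If `x ρ y` and `x * c ∈ T`, then weak left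
unitarity gives `e * c ∈ T`, and `e * c` acts on `T` from the right as `c` does.
-/

section Definitions

variable {S : Type*} [Mul S]

/-- A right congruence on the subsemigroup `T`, encoded as a relation on the ambient `S` that holds
only between elements of `T`. -/
structure IsRightCongruenceOn (T : Subsemigroup S) (r : S → S → Prop) : Prop where
  mem {x y : S} : r x y → x ∈ T ∧ y ∈ T
  refl {x : S} : x ∈ T → r x x
  symm {x y : S} : r x y → r y x
  trans {x y z : S} : r x y → r y z → r x z
  mul_right {x y c : S} : r x y → c ∈ T → r (x * c) (y * c)

/-- `T` is weakly left unitary with respect to `e`, which plays the role of an identity of `T`. -/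
def IsWeaklyLeftUnitary (T : Subsemigroup S) (e : S) : Prop :=
  ∀ a ∈ T, ∀ b : S, a * b ∈ T → e * b ∈ T

/-- The extension to `S` of a right congruence `r` on `T`: every right multiplier carrying `x` or
`y` into `T` carries the pair into `r`. It serves as an upper bound for the right congruence on `S`
generated by `r`. -/
def TranslatesRelated (T : Subsemigroup S) (r : S → S → Prop) (x y : S) : Prop :=
  ∀ c : S, x * c ∈ T ∨ y * c ∈ T → r (x * c) (y * c)

end Definitions

/-- The strong right congruence extension property (SRCEP) of a subsemigroup `T` of `S`. The
generated right congruence `ρ^S` enters as any `rS` with its defining property. -/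
def HasStrongRightCongruenceExtension {S : Type*} [Monoid S] (T : Subsemigroup S) : Prop :=
  ∀ r : S → S → Prop, IsRightCongruenceOn T r →
    ∀ rS : S → S → Prop, RCongGenBy {p : S × S | r p.1 p.2} rS →
      (∀ x y : S, r x y ↔ (rS x y ∧ x ∈ T ∧ y ∈ T)) ∧ (∀ t ∈ T, ∀ s : S, rS t s → s ∈ T)

theorem TranslatesRelated.rel_of_mem {S : Type*} [MulOneClass S] {T : Subsemigroup S}
    {r : S → S → Prop} {x y : S} (h : TranslatesRelated T r x y) (hx : x ∈ T) : r x y := by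
  simpa only [mul_one] using h 1 (.inl (by rwa [mul_one]))

namespace IsRightCongruenceOn

section WeaklyLeftUnitary

variable {S : Type*} [Semigroup S] {T : Subsemigroup S} {r : S → S → Prop} {e x y : S}

theorem mul_right_of_mul_mem (hr : IsRightCongruenceOn T r) (he : ∀ a ∈ T, a * e = a)
    (hT : IsWeaklyLeftUnitary T e) {c : S} (hxy : r x y) (hxc : x * c ∈ T) :
    r (x * c) (y * c) := by
  obtain ⟨hx, hy⟩ := hr.mem hxy
  have hec : e * c ∈ T := hT x hx c hxc
  simpa only [← mul_assoc, he x hx, he y hy] using hr.mul_right hxy hec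

theorem translatesRelated (hr : IsRightCongruenceOn T r) (he : ∀ a ∈ T, a * e = a)
    (hT : IsWeaklyLeftUnitary T e) (hxy : r x y) : TranslatesRelated T r x y := by
  rintro c (hxc | hyc)
  · exact hr.mul_right_of_mul_mem he hT hxy hxc
  · exact hr.symm (hr.mul_right_of_mul_mem he hT (hr.symm hxy) hyc)

end WeaklyLeftUnitary

theorem equivalence_translatesRelated {S : Type*} [Mul S] {T : Subsemigroup S}
    {r : S → S → Prop} (hr : IsRightCongruenceOn T r) : Equivalence (TranslatesRelated T r) where
  refl _ _ hc := hr.refl (hc.elim id id)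
  symm hxy c hc := hr.symm (hxy c hc.symm)
  trans := by
    rintro x y z hxy hyz c (hxc | hzc)
    · have hxyc : r (x * c) (y * c) := hxy c (.inl hxc)
      exact hr.trans hxyc (hyz c (.inl (hr.mem hxyc).2))
    · have hyzc : r (y * c) (z * c) := hyz c (.inr hzc)
      exact hr.trans (hxy c (.inr (hr.mem hyzc).1)) hyzc

theorem isRightCongruence_translatesRelated {S : Type*} [Monoid S] {T : Subsemigroup S}
    {r : S → S → Prop} (hr : IsRightCongruenceOn T r) :
    IsRightCongruence (TranslatesRelated T r) := by
  refine ⟨hr.equivalence_translatesRelated, fun x y c hxy d => ?_⟩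
  simpa only [mul_assoc] using hxy (c * d)

end IsRightCongruenceOn

theorem stmt8_general {S : Type*} [Monoid S] {T : Subsemigroup S} (e : T)
    (he : ∀ a ∈ T, a * (e : S) = a) (hT : IsWeaklyLeftUnitary T (e : S)) :
    HasStrongRightCongruenceExtension T := by
  rintro r hr rS ⟨-, r_le_rS, rS_min⟩
  have rel_of_mem {x y : S} (hxy : rS x y) (hx : x ∈ T) : r x y :=
    (rS_min _ hr.isRightCongruence_translatesRelated
      (fun _ hp => hr.translatesRelated he hT hp) x y hxy).rel_of_mem hx
  refine ⟨fun x y => ⟨fun hxy => ⟨r_le_rS (x, y) hxy, hr.mem hxy⟩, ?_⟩, fun t ht s hts => ?_⟩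
  · rintro ⟨hxy, hx, -⟩
    exact rel_of_mem hxy hx
  · exact (hr.mem (rel_of_mem hts ht)).2

theorem stmt8 {S : Type*} [Monoid S] (T : Set S)
    (hT : ∀ a ∈ T, ∀ b ∈ T, a * b ∈ T)
    (e : S) (he : e ∈ T)
    (hel : ∀ a ∈ T, e * a = a) (her : ∀ a ∈ T, a * e = a)
    (hwlu : ∀ a ∈ T, ∀ b : S, a * b ∈ T → e * b ∈ T)
    (r : S → S → Prop)
    (hsupp : ∀ x y : S, r x y → x ∈ T ∧ y ∈ T)
    (hrefl : ∀ x ∈ T, r x x)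
    (hsymm : ∀ x y : S, r x y → r y x)
    (htrans : ∀ x y w : S, r x y → r y w → r x w)
    (hcomp : ∀ x y : S, r x y → ∀ c ∈ T, r (x * c) (y * c))
    (rS : S → S → Prop) (hrS : RCongGenBy {p : S × S | r p.1 p.2} rS) :
    (∀ x y : S, r x y ↔ (rS x y ∧ x ∈ T ∧ y ∈ T)) ∧
    (∀ t ∈ T, ∀ s : S, rS t s → s ∈ T) :=
  stmt8_general (T := ⟨T, fun ha hb => hT _ ha _ hb⟩) ⟨e, he⟩ her hwlu r
    ⟨hsupp _ _, hrefl _, hsymm _ _, htrans _ _ _, fun hxy => hcomp _ _ hxy _⟩ rS hrS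
end
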